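/- arXiv:2310.07156 — 4 statements merged into one kernel-verified Lean document; each statement's English description precedes it below -/
import Mathlib

section
/- Let t be a cyclic tour on n cities, let 0 < b < e < n, and let t' = 2OPT(t,b,e). If the distance function is symmetric (d(c,c') = d(c',c) for all cities c, c'), then the total distance of the new tour satisfies D(t') = D(t) + d(t_{b-1}, t_e) + d(t_b, t_{e+1}) − d(t_{b-1}, t_b) − d(t_e, t_{e+1}). -/
/-- A cyclic tour on `n` cities `1,…,n`: a sequence `t 0, …, t n` with
`t 0 = t n = 1` whose restriction to positions `1,…,n−1` is a bijection
onto the cities `2,…,n`. -/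
def IsCyclicTour (n : ℕ) (t : ℕ → ℕ) : Prop :=
  t 0 = 1 ∧ t n = 1 ∧ Set.BijOn t (Set.Icc 1 (n - 1)) (Set.Icc 2 n)

/-- The 2OPT operator: reverse the tour segment between positions `b` and `e`. -/
def twoOpt (t : ℕ → ℕ) (b e : ℕ) : ℕ → ℕ :=
  fun k => if b ≤ k ∧ k ≤ e then t (b + e - k) else t k

/-- Total distance `D(t)` travelled along the tour. -/
def tourDist (n : ℕ) (d : ℕ → ℕ → ℝ) (t : ℕ → ℕ) : ℝ :=
  ∑ k ∈ Finset.range n, d (t k) (t (k + 1))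

/-!
Cut a walk at the two edges `(b - 1, b)` and `(e, e + 1)`. Reversing the segment from `b` to `e`
leaves the two outer pieces untouched, and by symmetry of `d` preserves the length of the segment,
so only the two cut edges contribute to the change of length.
-/

section Walk

variable {α M : Type*} [AddCommMonoid M]

/-- The length of the walk `x a, x (a + 1), …, x b`, where an edge from `u` to `v` has length
`d u v`. A walk is cut out of an infinite sequence by its end positions, so that subwalks need no
reindexing; the length is `0` if `b ≤ a`. -/
def walkLength (d : α → α → M) (x : ℕ → α) (a b : ℕ) : M :=
  ∑ k ∈ Finset.Ico a b, d (x k) (x (k + 1))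

theorem walkLength_congr (d : α → α → M) {x y : ℕ → α} {a b : ℕ}
    (hxy : Set.EqOn x y (Set.Icc a b)) : walkLength d x a b = walkLength d y a b := by
  refine Finset.sum_congr rfl fun k hk => ?_
  obtain ⟨hak, hkb⟩ := Finset.mem_Ico.mp hk
  rw [hxy ⟨hak, hkb.le⟩, hxy ⟨hak.trans k.le_succ, hkb⟩]

theorem walkLength_add_walkLength (d : α → α → M) (x : ℕ → α) {a b c : ℕ} (hab : a ≤ b)
    (hbc : b ≤ c) : walkLength d x a b + walkLength d x b c = walkLength d x a c :=
  Finset.sum_Ico_consecutive _ hab hbc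

theorem walkLength_self_succ (d : α → α → M) (x : ℕ → α) (a : ℕ) :
    walkLength d x a (a + 1) = d (x a) (x (a + 1)) := by
  rw [walkLength, Nat.Ico_succ_singleton, Finset.sum_singleton]

theorem walkLength_reverse {d : α → α → M} (hd : ∀ u v, d u v = d v u) (x : ℕ → α) (a b : ℕ) :
    walkLength d (fun k => x (a + b - k)) a b = walkLength d x a b := by
  have hreflect : ∀ k ∈ Finset.Ico a b, a + b - 1 - k ∈ Finset.Ico a b := by
    intro k hk
    simp only [Finset.mem_Ico] at hk ⊢
    omega
  have hinvolutive : ∀ k ∈ Finset.Ico a b, a + b - 1 - (a + b - 1 - k) = k := by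
    intro k hk
    rw [Finset.mem_Ico] at hk
    omega
  refine Finset.sum_nbij' _ _ hreflect hreflect hinvolutive hinvolutive fun k hk => ?_
  have hkb : k < b := (Finset.mem_Ico.mp hk).2
  have htail : a + b - (k + 1) = a + b - 1 - k := by omega
  have hhead : a + b - k = a + b - 1 - k + 1 := by omega
  simp only [htail, hhead]
  exact hd _ _

theorem walkLength_eq_add_edge_add_walkLength (d : α → α → M) (x : ℕ → α) {a p b : ℕ} (hap : a ≤ p)
    (hpb : p < b) :
    walkLength d x a b = walkLength d x a p + d (x p) (x (p + 1)) + walkLength d x (p + 1) b := by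
  rw [← walkLength_self_succ d x p, walkLength_add_walkLength d x hap p.le_succ,
    walkLength_add_walkLength d x (hap.trans p.le_succ) hpb]

end Walk

theorem tourDist_eq_walkLength (n : ℕ) (d : ℕ → ℕ → ℝ) (t : ℕ → ℕ) :
    tourDist n d t = walkLength d t 0 n := by
  rw [tourDist, walkLength, Finset.range_eq_Ico]

theorem twoOpt_eqOn_Icc (t : ℕ → ℕ) (b e : ℕ) :
    Set.EqOn (twoOpt t b e) (fun k => t (b + e - k)) (Set.Icc b e) :=
  fun _ hk => if_pos hk

theorem twoOpt_eqOn_compl_Icc (t : ℕ → ℕ) (b e : ℕ) :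
    Set.EqOn (twoOpt t b e) t (Set.Icc b e)ᶜ :=
  fun _ hk => if_neg hk

theorem twoOpt_tourDist_general {α G : Type*} [AddCommGroup G] {d : α → α → G}
    (hd : ∀ u v, d u v = d v u) {x y : ℕ → α} {m b e n : ℕ} (hmb : m < b) (hbe : b ≤ e)
    (hen : e < n) (hreverse : Set.EqOn y (fun k => x (b + e - k)) (Set.Icc b e))
    (hfix : Set.EqOn y x (Set.Icc b e)ᶜ) :
    walkLength d y m n
      = walkLength d x m n + d (x (b - 1)) (x e) + d (x b) (x (e + 1))
        - d (x (b - 1)) (x b) - d (x e) (x (e + 1)) := by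
  obtain ⟨p, rfl⟩ : ∃ p, b = p + 1 := ⟨b - 1, by omega⟩
  have hbefore : Set.EqOn y x (Set.Iic p) :=
    fun k hkp => hfix fun hk => (Nat.lt_of_succ_le hk.1).not_ge hkp
  have hafter : Set.EqOn y x (Set.Ici (e + 1)) :=
    fun k hek => hfix fun hk => (Nat.lt_of_succ_le hek).not_ge hk.2
  have hy_start : y (p + 1) = x e := by simpa using hreverse (Set.left_mem_Icc.mpr hbe)
  have hy_end : y e = x (p + 1) := by simpa using hreverse (Set.right_mem_Icc.mpr hbe)
  have hmiddle : walkLength d y (p + 1) e = walkLength d x (p + 1) e :=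
    (walkLength_congr d hreverse).trans (walkLength_reverse hd x (p + 1) e)
  have hcut (z : ℕ → α) : walkLength d z m n = walkLength d z m p + d (z p) (z (p + 1)) +
      (walkLength d z (p + 1) e + d (z e) (z (e + 1)) + walkLength d z (e + 1) n) := by
    rw [walkLength_eq_add_edge_add_walkLength d z (Nat.le_of_lt_succ hmb)
        (Nat.lt_of_succ_lt (hbe.trans_lt hen)),
      walkLength_eq_add_edge_add_walkLength d z hbe hen]
  rw [hcut y, hcut x, walkLength_congr d (hbefore.mono Set.Icc_subset_Iic_self),
    walkLength_congr d (hafter.mono Set.Icc_subset_Ici_self), hmiddle,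
    hbefore Set.self_mem_Iic, hafter Set.self_mem_Ici, hy_start, hy_end, Nat.add_sub_cancel]
  abel

/-- If `d` is symmetric then
`D(t') = D(t) + d(t_{b-1}, t_e) + d(t_b, t_{e+1}) − d(t_{b-1}, t_b) − d(t_e, t_{e+1})`
for the tour `t' = 2OPT(t,b,e)`. -/
theorem twoOpt_tourDist
    (n : ℕ) (hn : 2 ≤ n) (d : ℕ → ℕ → ℝ)
    (hsym : ∀ c c', d c c' = d c' c)
    (t : ℕ → ℕ) (ht : IsCyclicTour n t)
    (b e : ℕ) (hb : 0 < b) (hbe : b < e) (he : e < n) :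
    tourDist n d (twoOpt t b e)
      = tourDist n d t + d (t (b - 1)) (t e) + d (t b) (t (e + 1))
        - d (t (b - 1)) (t b) - d (t e) (t (e + 1)) := by
  simpa only [tourDist_eq_walkLength] using twoOpt_tourDist_general hsym hb hbe.le he
    (twoOpt_eqOn_Icc t b e) (twoOpt_eqOn_compl_Icc t b e)
end

section
/- Let t be a cyclic tour on n cities, let 0 < b < e < n, and let t' = 2OPT(t,b,e). If the distance function is symmetric, then the sum of the distances along the interior edges of the reversed segment is unchanged: Σ_{k=b}^{e−1} d(t'_k, t'_{k+1}) = Σ_{k=b}^{e−1} d(t_k, t_{k+1}). -/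
theorem twoOpt_apply_of_mem_Icc {t : ℕ → ℕ} {b e k : ℕ} (hk : k ∈ Set.Icc b e) :
    twoOpt t b e k = t (b + e - k) :=
  if_pos hk

theorem sum_Ico_edges_reflect {α M : Type*} [AddCommMonoid M] {d : α → α → M}
    (hsym : ∀ c c', d c c' = d c' c) (t : ℕ → α) (b e : ℕ) :
    ∑ k ∈ Finset.Ico b e, d (t (b + e - k)) (t (b + e - (k + 1)))
      = ∑ k ∈ Finset.Ico b e, d (t k) (t (k + 1)) := by
  obtain _ | m := e
  · simp
  calc ∑ k ∈ Finset.Ico b (m + 1), d (t (b + (m + 1) - k)) (t (b + (m + 1) - (k + 1)))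
      = ∑ k ∈ Finset.Ico b (m + 1), d (t (b + m - k)) (t (b + m - k + 1)) := by
        refine Finset.sum_congr rfl fun k hk => ?_
        have hkm : k < m + 1 := (Finset.mem_Ico.mp hk).2
        have source_eq : b + (m + 1) - k = b + m - k + 1 := by omega
        have target_eq : b + (m + 1) - (k + 1) = b + m - k := by omega
        rw [source_eq, target_eq, hsym]
    _ = ∑ k ∈ Finset.Ico (b + m + 1 - (m + 1)) (b + m + 1 - b), d (t k) (t (k + 1)) :=
        Finset.sum_Ico_reflect (fun k => d (t k) (t (k + 1))) b (by omega)
    _ = ∑ k ∈ Finset.Ico b (m + 1), d (t k) (t (k + 1)) := by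
        rw [add_assoc, Nat.add_sub_cancel, Nat.add_sub_cancel_left]

theorem twoOpt_interior_edges_sum_general {M : Type*} [AddCommMonoid M] {d : ℕ → ℕ → M}
    (hsym : ∀ c c', d c c' = d c' c) (t : ℕ → ℕ) (b e : ℕ) :
    ∑ k ∈ Finset.Ico b e, d (twoOpt t b e k) (twoOpt t b e (k + 1))
      = ∑ k ∈ Finset.Ico b e, d (t k) (t (k + 1)) := by
  rw [← sum_Ico_edges_reflect hsym t b e]
  refine Finset.sum_congr rfl fun k hk => ?_
  obtain ⟨hbk, hke⟩ := Finset.mem_Ico.mp hk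
  rw [twoOpt_apply_of_mem_Icc ⟨hbk, hke.le⟩,
    twoOpt_apply_of_mem_Icc ⟨Nat.le_succ_of_le hbk, hke⟩]

/-- If `d` is symmetric, the sum of the distances along the interior edges of the
reversed segment (edges from position `k` to `k+1` for `b ≤ k ≤ e−1`) is unchanged
by 2OPT. -/
theorem twoOpt_interior_edges_sum
    (n : ℕ) (hn : 2 ≤ n) (d : ℕ → ℕ → ℝ)
    (hsym : ∀ c c', d c c' = d c' c)
    (t : ℕ → ℕ) (ht : IsCyclicTour n t)
    (b e : ℕ) (hb : 0 < b) (hbe : b < e) (he : e < n) :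
    ∑ k ∈ Finset.Ico b e, d (twoOpt t b e k) (twoOpt t b e (k + 1))
      = ∑ k ∈ Finset.Ico b e, d (t k) (t (k + 1)) :=
  twoOpt_interior_edges_sum_general hsym t b e
end

section
/- (TSP Reduction) Consider a TTP instance with s_max = s_min = s and knapsack capacity W ≥ Σ_{i=1}^{m} w_i. Then for every cyclic tour t, the maximum of the objective N(t,p) over all collection plans p satisfying the knapsack constraint K(p) equals Σ_{i=1}^{m} π_i − (R/s)·D(t), and this maximum is attained by the all-ones plan. Consequently, a cyclic tour t* minimises D(t) over all cyclic tours if and only if t* maximises max_{p : K(p)} N(t,p) over all cyclic tours; i.e. solving this TTP is equivalent to solving the underlying TSP. -/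
/-- The speed function `s(w) = s_max − (w/W)(s_max − s_min)`. -/
noncomputable def speed (W smax smin w : ℝ) : ℝ :=
  smax - (w / W) * (smax - smin)

/-- `w_p(c)`: total weight of the items collected from city `c` under plan `p`. -/
def cityWeight (m : ℕ) (w : Fin m → ℝ) (l : Fin m → ℕ) (p : Fin m → ℝ) (c : ℕ) : ℝ :=
  ∑ i, if l i = c then w i * p i else 0

/-- `w_{t,p}(k)`: knapsack weight after collecting items from cities up to
position `k` of the tour `t` under plan `p`. -/
def knapWeight (m : ℕ) (w : Fin m → ℝ) (l : Fin m → ℕ)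
    (t : ℕ → ℕ) (p : Fin m → ℝ) (k : ℕ) : ℝ :=
  ∑ k' ∈ Finset.range (k + 1), cityWeight m w l p (t k')

/-- `τ_{t,p}(k)`: travelling time up to position `k` in the tour. -/
noncomputable def travelTimeUpTo (m : ℕ) (d : ℕ → ℕ → ℝ) (w : Fin m → ℝ)
    (l : Fin m → ℕ) (W smax smin : ℝ) (t : ℕ → ℕ) (p : Fin m → ℝ) (k : ℕ) : ℝ :=
  ∑ k' ∈ Finset.range k, d (t k') (t (k' + 1)) / speed W smax smin (knapWeight m w l t p k')

/-- `T(t,p)`: total travelling time of the tour `t` under plan `p`. -/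
noncomputable def travelTime (n m : ℕ) (d : ℕ → ℕ → ℝ) (w : Fin m → ℝ)
    (l : Fin m → ℕ) (W smax smin : ℝ) (t : ℕ → ℕ) (p : Fin m → ℝ) : ℝ :=
  travelTimeUpTo m d w l W smax smin t p n

section TravellingThief

variable {ι : Type*} {m : ℕ} {w profit : Fin m → ℝ} {W R s : ℝ}

/-- A collection plan `p ∈ {0,1}^m` (with an arbitrary type `ι` of items), encoded as a real vector
so that `P(p)` and `W(p)` are plain real sums. -/
def IsCollectionPlan (p : ι → ℝ) : Prop :=
  ∀ i, p i = 0 ∨ p i = 1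

/-- The objective `N(t,p) = P(p) − R·T(t,p)` of the travelling thief problem. -/
noncomputable def objective (n : ℕ) (d : ℕ → ℕ → ℝ) (w profit : Fin m → ℝ) (l : Fin m → ℕ)
    (W R smax smin : ℝ) (t : ℕ → ℕ) (p : Fin m → ℝ) : ℝ :=
  (∑ i, profit i * p i) - R * travelTime n m d w l W smax smin t p

/-- The values `N(t,p)` taken along a fixed tour `t` as `p` ranges over the collection plans with
`W(p) ≤ W`; the greatest element of this set is the value of `t` in the travelling thief
problem. -/
def objectiveValues (n : ℕ) (d : ℕ → ℕ → ℝ) (w profit : Fin m → ℝ) (l : Fin m → ℕ)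
    (W R smax smin : ℝ) (t : ℕ → ℕ) : Set ℝ :=
  {x | ∃ p, IsCollectionPlan p ∧ (∑ i, w i * p i) ≤ W ∧
    x = objective n d w profit l W R smax smin t p}

lemma isCollectionPlan_one : IsCollectionPlan (1 : ι → ℝ) :=
  fun _ => Or.inr rfl

lemma IsCollectionPlan.le_one {p : ι → ℝ} (hp : IsCollectionPlan p) (i : ι) : p i ≤ 1 :=
  (hp i).elim (fun h => h.trans_le zero_le_one) le_of_eq

lemma IsCollectionPlan.sum_mul_le_sum [Fintype ι] {p f : ι → ℝ} (hp : IsCollectionPlan p)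
    (hf : ∀ i, 0 ≤ f i) : ∑ i, f i * p i ≤ ∑ i, f i :=
  Finset.sum_le_sum fun i _ => mul_le_of_le_one_right (hf i) (hp.le_one i)

lemma speed_self (W s x : ℝ) : speed W s s x = s := by
  simp [speed]

lemma travelTime_self (n : ℕ) (d : ℕ → ℕ → ℝ) (w : Fin m → ℝ) (l : Fin m → ℕ) (W s : ℝ)
    (t : ℕ → ℕ) (p : Fin m → ℝ) : travelTime n m d w l W s s t p = tourDist n d t / s := by
  simp only [travelTime, travelTimeUpTo, tourDist, speed_self, Finset.sum_div]

lemma objective_self (n : ℕ) (d : ℕ → ℕ → ℝ) (w profit : Fin m → ℝ) (l : Fin m → ℕ) (W R s : ℝ)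
    (t : ℕ → ℕ) (p : Fin m → ℝ) :
    objective n d w profit l W R s s t p =
      (∑ i, profit i * p i) - R / s * tourDist n d t := by
  rw [objective, travelTime_self, mul_div_left_comm, mul_comm (R / s)]

lemma objective_self_one (n : ℕ) (d : ℕ → ℕ → ℝ) (w profit : Fin m → ℝ) (l : Fin m → ℕ)
    (W R s : ℝ) (t : ℕ → ℕ) :
    objective n d w profit l W R s s t 1 = (∑ i, profit i) - R / s * tourDist n d t := by
  simp only [objective_self, Pi.one_apply, mul_one]

lemma isGreatest_objectiveValues_self (n : ℕ) (d : ℕ → ℕ → ℝ) (l : Fin m → ℕ) (R s : ℝ)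
    (hprofit : ∀ i, 0 ≤ profit i) (hcap : ∑ i, w i ≤ W) (t : ℕ → ℕ) :
    IsGreatest (objectiveValues n d w profit l W R s s t)
      ((∑ i, profit i) - R / s * tourDist n d t) := by
  constructor
  · exact ⟨1, isCollectionPlan_one, by simpa only [Pi.one_apply, mul_one] using hcap,
      (objective_self_one n d w profit l W R s t).symm⟩
  · rintro _ ⟨p, hp, -, rfl⟩
    rw [objective_self]
    exact sub_le_sub_right (hp.sum_mul_le_sum hprofit) _

lemma sSup_objectiveValues_self_le_iff {n : ℕ} {d : ℕ → ℕ → ℝ} {l : Fin m → ℕ}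
    (hprofit : ∀ i, 0 ≤ profit i) (hR : 0 < R) (hs : 0 < s) (hcap : ∑ i, w i ≤ W)
    {t t' : ℕ → ℕ} :
    sSup (objectiveValues n d w profit l W R s s t) ≤
        sSup (objectiveValues n d w profit l W R s s t') ↔
      tourDist n d t' ≤ tourDist n d t := by
  have sSup_eq (t : ℕ → ℕ) : sSup (objectiveValues n d w profit l W R s s t) =
      (∑ i, profit i) - R / s * tourDist n d t :=
    (isGreatest_objectiveValues_self n d l R s hprofit hcap t).csSup_eq
  rw [sSup_eq, sSup_eq, sub_le_sub_iff_left, mul_le_mul_iff_right₀ (div_pos hR hs)]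

theorem tsp_reduction_general (n : ℕ) (d : ℕ → ℕ → ℝ) (l : Fin m → ℕ)
    (hprofit : ∀ i, 0 ≤ profit i) (_hW : 0 < W) (hR : 0 < R) (hs : 0 < s)
    (hcap : ∑ i, w i ≤ W) :
    (∀ t, IsGreatest (objectiveValues n d w profit l W R s s t)
        ((∑ i, profit i) - R / s * tourDist n d t) ∧
      objective n d w profit l W R s s t 1 = (∑ i, profit i) - R / s * tourDist n d t) ∧
    ∀ (tours : Set (ℕ → ℕ)) (tstar : ℕ → ℕ),
      (∀ t ∈ tours, tourDist n d tstar ≤ tourDist n d t) ↔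
        ∀ t ∈ tours, sSup (objectiveValues n d w profit l W R s s t) ≤
          sSup (objectiveValues n d w profit l W R s s tstar) :=
  ⟨fun t => ⟨isGreatest_objectiveValues_self n d l R s hprofit hcap t,
      objective_self_one n d w profit l W R s t⟩,
    fun _ _ => forall₂_congr fun _ _ =>
      (sSup_objectiveValues_self_le_iff hprofit hR hs hcap).symm⟩

end TravellingThief

/-- TSP Reduction: if `s_max = s_min = s` and the knapsack capacity is at least the
total weight of all items, then for every cyclic tour `t` the maximum of the
objective `N(t,p) = P(p) − R·T(t,p)` over all plans `p` satisfying the knapsack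
constraint equals `Σ π_i − (R/s)·D(t)`, attained by the all-ones plan; consequently
a cyclic tour minimises `D` iff it maximises `max_p N(t,p)`. -/
theorem tsp_reduction
    (n m : ℕ) (hn : 2 ≤ n)
    (d : ℕ → ℕ → ℝ) (hd : ∀ c c', c ≠ c' → 0 < d c c')
    (w profit : Fin m → ℝ) (hw : ∀ i, 0 < w i) (hprofit : ∀ i, 0 < profit i)
    (l : Fin m → ℕ) (hl : ∀ i, 1 < l i)
    (W R smax smin : ℝ) (hW : 0 < W) (hR : 0 < R)
    (hs : smin ≤ smax) (hsmin : 0 < smin)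
    (hconst : smax = smin)
    (hcap : (∑ i, w i) ≤ W) :
    (∀ t, IsCyclicTour n t →
      IsGreatest
        {x : ℝ | ∃ p : Fin m → ℝ, (∀ i, p i = 0 ∨ p i = 1) ∧ (∑ i, w i * p i) ≤ W ∧
          x = (∑ i, profit i * p i) - R * travelTime n m d w l W smax smin t p}
        ((∑ i, profit i) - (R / smin) * tourDist n d t)
      ∧ (∑ i, profit i * ((fun _ : Fin m => (1 : ℝ)) i))
          - R * travelTime n m d w l W smax smin t (fun _ => 1)
          = (∑ i, profit i) - (R / smin) * tourDist n d t)
    ∧ (∀ tstar, IsCyclicTour n tstar →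
        ((∀ t, IsCyclicTour n t → tourDist n d tstar ≤ tourDist n d t)
          ↔ (∀ t, IsCyclicTour n t →
              sSup {x : ℝ | ∃ p : Fin m → ℝ, (∀ i, p i = 0 ∨ p i = 1) ∧
                  (∑ i, w i * p i) ≤ W ∧
                  x = (∑ i, profit i * p i) - R * travelTime n m d w l W smax smin t p}
              ≤ sSup {x : ℝ | ∃ p : Fin m → ℝ, (∀ i, p i = 0 ∨ p i = 1) ∧
                  (∑ i, w i * p i) ≤ W ∧
                  x = (∑ i, profit i * p i)
                    - R * travelTime n m d w l W smax smin tstar p}))) := by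
  subst hconst
  obtain ⟨hmax, hiff⟩ :=
    tsp_reduction_general n d l (fun i => (hprofit i).le) hW hR hsmin hcap
  exact ⟨fun t _ => hmax t, fun tstar _ => hiff {t | IsCyclicTour n t} tstar⟩
end

section
/- (2OPT for TSPC) Let t be a cyclic tour, p a collection plan, 0 < b < e < n, and t' = 2OPT(t,b,e), with the distance function symmetric. Then the per-edge travelling times outside the segment [b−1, e] coincide for t and t', and consequently T(t',p) = T(t,p) + τ_{t',p}(e+1) − τ_{t,p}(e+1). -/
/-!
2OPT permutes positions by the reflection `twoOpt id b e`, which maps every initial segment ending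
before position `b` or containing position `e` onto itself. An edge not meeting the reversed
segment therefore joins the same cities and is travelled with the same load, so its cost cannot
change, whatever function of endpoints and load that cost is.
-/

section TwoOpt

variable {b e k N : ℕ}

theorem twoOpt_apply_of_notMem (t : ℕ → ℕ) (hk : k < b ∨ e < k) : twoOpt t b e k = t k :=
  if_neg (by omega)

theorem twoOpt_eq_comp (t : ℕ → ℕ) (b e : ℕ) : twoOpt t b e = t ∘ twoOpt id b e := by
  ext k
  simp only [twoOpt, Function.comp_apply, id, apply_ite t]

theorem twoOpt_id_involutive (b e : ℕ) : Function.Involutive (twoOpt id b e) := by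
  intro k
  simp only [twoOpt, id]
  split_ifs <;> omega

theorem twoOpt_id_lt_iff_lt (hN : N ≤ b ∨ e < N) : twoOpt id b e k < N ↔ k < N := by
  simp only [twoOpt, id]
  split_ifs <;> omega

theorem sum_range_twoOpt {M : Type*} [AddCommMonoid M] (f : ℕ → M) (t : ℕ → ℕ)
    (hN : N ≤ b ∨ e < N) :
    ∑ i ∈ Finset.range N, f (twoOpt t b e i) = ∑ i ∈ Finset.range N, f (t i) := by
  rw [twoOpt_eq_comp]
  refine Finset.sum_equiv (twoOpt_id_involutive b e).toPerm (fun i => ?_) fun _ _ => rfl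
  simp only [Finset.mem_range, Function.Involutive.coe_toPerm, twoOpt_id_lt_iff_lt hN]

end TwoOpt

section LoadDependentCost

variable {M G : Type*} [AddCommMonoid M] {b e k : ℕ}

/-- The load carried when leaving position `k` of the tour `t`, if city `c` contributes `f c`. -/
def cumulativeLoad (f : ℕ → M) (t : ℕ → ℕ) (k : ℕ) : M :=
  ∑ i ∈ Finset.range (k + 1), f (t i)

/-- The cost of the edge leaving position `k` of the tour `t`, where `φ c c' x` is the cost of
going from `c` to `c'` with load `x`. For travelling times, `φ c c' x` is distance over speed. -/
def edgeCost (φ : ℕ → ℕ → M → G) (f : ℕ → M) (t : ℕ → ℕ) (k : ℕ) : G :=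
  φ (t k) (t (k + 1)) (cumulativeLoad f t k)

theorem cumulativeLoad_twoOpt (f : ℕ → M) (t : ℕ → ℕ) (hk : k < b ∨ e ≤ k) :
    cumulativeLoad f (twoOpt t b e) k = cumulativeLoad f t k :=
  sum_range_twoOpt f t (by omega)

theorem edgeCost_twoOpt (φ : ℕ → ℕ → M → G) (f : ℕ → M) (t : ℕ → ℕ)
    (hk : k + 1 < b ∨ e < k) :
    edgeCost φ f (twoOpt t b e) k = edgeCost φ f t k := by
  simp only [edgeCost]
  rw [twoOpt_apply_of_notMem t (by omega), twoOpt_apply_of_notMem t (by omega),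
    cumulativeLoad_twoOpt f t (by omega)]

/-- The cost of travelling along the tour `t` up to position `k`. -/
def pathCost [AddCommMonoid G] (φ : ℕ → ℕ → M → G) (f : ℕ → M) (t : ℕ → ℕ) (k : ℕ) : G :=
  ∑ i ∈ Finset.range k, edgeCost φ f t i

variable [AddCommGroup G]

theorem pathCost_twoOpt_sub (φ : ℕ → ℕ → M → G) (f : ℕ → M) (t : ℕ → ℕ) {j n : ℕ}
    (hj : e < j) (hjn : j ≤ n) :
    pathCost φ f (twoOpt t b e) n - pathCost φ f (twoOpt t b e) j =
      pathCost φ f t n - pathCost φ f t j := by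
  simp only [pathCost, ← Finset.sum_Ico_eq_sub _ hjn]
  refine Finset.sum_congr rfl fun k hk => edgeCost_twoOpt φ f t (Or.inr ?_)
  exact hj.trans_le (Finset.mem_Ico.mp hk).1

theorem twoOpt_travelTime_general (φ : ℕ → ℕ → M → G) (f : ℕ → M) (t : ℕ → ℕ) (b : ℕ) {n : ℕ}
    (he : e < n) :
    (∀ k, k + 1 < b ∨ e < k → edgeCost φ f (twoOpt t b e) k = edgeCost φ f t k) ∧
      pathCost φ f (twoOpt t b e) n =
        pathCost φ f t n + pathCost φ f (twoOpt t b e) (e + 1) - pathCost φ f t (e + 1) := by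
  refine ⟨fun k hk => edgeCost_twoOpt φ f t hk, ?_⟩
  rw [add_sub_right_comm]
  exact sub_eq_iff_eq_add.mp (pathCost_twoOpt_sub φ f t e.lt_succ_self he)

end LoadDependentCost

/-- 2OPT for TSPC: with a symmetric distance function, the per-edge travelling
times outside the positions `[b−1, e]` coincide for `t` and `t' = 2OPT(t,b,e)`,
and consequently `T(t',p) = T(t,p) + τ_{t',p}(e+1) − τ_{t,p}(e+1)`. -/
theorem twoOpt_travelTime
    (n m : ℕ) (hn : 2 ≤ n)
    (d : ℕ → ℕ → ℝ) (hd : ∀ c c', c ≠ c' → 0 < d c c')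
    (hsym : ∀ c c', d c c' = d c' c)
    (w : Fin m → ℝ) (hw : ∀ i, 0 < w i)
    (l : Fin m → ℕ) (hl : ∀ i, 1 < l i)
    (W smax smin : ℝ) (hW : 0 < W) (hs : smin ≤ smax) (hsmin : 0 < smin)
    (t : ℕ → ℕ) (ht : IsCyclicTour n t)
    (p : Fin m → ℝ) (hp : ∀ i, p i = 0 ∨ p i = 1)
    (b e : ℕ) (hb : 0 < b) (hbe : b < e) (he : e < n)
    (hspeed : ∀ k, speed W smax smin (knapWeight m w l t p k) ≠ 0)
    (hspeed' : ∀ k, speed W smax smin (knapWeight m w l (twoOpt t b e) p k) ≠ 0) :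
    (∀ k, k < n → ¬(b - 1 ≤ k ∧ k ≤ e) →
        d (twoOpt t b e k) (twoOpt t b e (k + 1))
            / speed W smax smin (knapWeight m w l (twoOpt t b e) p k)
          = d (t k) (t (k + 1)) / speed W smax smin (knapWeight m w l t p k))
    ∧ travelTime n m d w l W smax smin (twoOpt t b e) p
        = travelTime n m d w l W smax smin t p
          + travelTimeUpTo m d w l W smax smin (twoOpt t b e) p (e + 1)
          - travelTimeUpTo m d w l W smax smin t p (e + 1) :=
  (twoOpt_travelTime_general (fun c c' x => d c c' / speed W smax smin x)
    (cityWeight m w l p) t b he).imp_left fun edge_eq k _ hk => edge_eq k (by omega)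
end
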